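/- Let each f_i : R^d → R be differentiable with L_i-Lipschitz gradient and let f = (1/n) Σ_{i=1}^n f_i. Let S be a proper sampling over [n] with probability vector p, let v ∈ R^n satisfy the ESO condition for S, and set b = Σ_i p_i and K = (b/n²) Σ_{i=1}^n v_i L_i²/p_i. Then for any points x, x̃ ∈ R^d, the SVRG stochastic gradient estimator w := Σ_{i∈S} (∇f_i(x) − ∇f_i(x̃))/(n p_i) + ∇f(x̃) satisfies E‖w‖² ≤ 2‖∇f(x)‖² + (2K/b)·‖x − x̃‖², where the expectation is over the random set S. -/

import Mathlib

open scoped BigOperators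

/-!
The estimator is `∑_{i ∈ S} aᵢ + ∇F(x̃)` with `aᵢ = (n pᵢ)⁻¹ (∇fᵢ(x) - ∇fᵢ(x̃))`. The importance
weights make its mean `∇F(x)`, and its variance is `∑ᵢⱼ (P - p pᵀ)ᵢⱼ ⟪aᵢ, aⱼ⟫`. As the Gram matrix
of the `aᵢ` is positive semidefinite, the Schur product theorem lets one replace `P - p pᵀ` by the
diagonal matrix of the ESO condition; the variance is thus at most `∑ pᵢ vᵢ ‖aᵢ‖²`, and by the
Lipschitz bounds at most `(K / b) ‖x - x̃‖²`.
-/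

open scoped InnerProductSpace

section InnerProductSpace

variable {ι E : Type*} [NormedAddCommGroup E] [InnerProductSpace ℝ E]

lemma norm_sum_sq_eq_sum_sum_inner (S : Finset ι) (a : ι → E) :
    ‖∑ i ∈ S, a i‖ ^ 2 = ∑ i ∈ S, ∑ j ∈ S, ⟪a i, a j⟫_ℝ := by
  simp_rw [← real_inner_self_eq_norm_sq, sum_inner, inner_sum]

lemma sum_sum_posSemidef_mul_inner_nonneg [Fintype ι] {M : Matrix ι ι ℝ} (hM : M.PosSemidef)
    (a : ι → E) : 0 ≤ ∑ i, ∑ j, M i j * ⟪a i, a j⟫_ℝ := by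
  have hSchur := (hM.hadamard (Matrix.posSemidef_gram ℝ a)).dotProduct_mulVec_nonneg 1
  simpa [dotProduct, Matrix.mulVec, Matrix.gram_apply] using hSchur

end InnerProductSpace

section Sampling

variable {ι E : Type*} [Fintype ι] [DecidableEq ι]

/-- The probability vector `p` of a random subset of `ι`, whose law is encoded by the weights
`w S = Prob(S)`. -/
def inclusionProb (w : Finset ι → ℝ) (i : ι) : ℝ :=
  ∑ S with i ∈ S, w S

/-- The probability matrix `P` of a random subset of `ι` with law `w`. -/
def pairInclusionProb (w : Finset ι → ℝ) : Matrix ι ι ℝ :=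
  Matrix.of fun i j => ∑ S with i ∈ S ∧ j ∈ S, w S

/-- The covariance matrix `P - p pᵀ` of the membership indicators of a random subset. -/
def inclusionCov (w : Finset ι → ℝ) : Matrix ι ι ℝ :=
  pairInclusionProb w - Matrix.of fun i j => inclusionProb w i * inclusionProb w j

/-- The expected separable overapproximation condition `P - p pᵀ ⪯ Diag(p₁ v₁, …, pₙ vₙ)`. -/
def IsESO (w : Finset ι → ℝ) (v : ι → ℝ) : Prop :=
  (Matrix.diagonal (fun i => inclusionProb w i * v i) - inclusionCov w).PosSemidef

lemma sum_smul_sum_mem [AddCommGroup E] [Module ℝ E] (w : Finset ι → ℝ) (a : ι → E) :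
    ∑ S, w S • ∑ i ∈ S, a i = ∑ i, inclusionProb w i • a i := by
  simp_rw [inclusionProb, Finset.sum_smul, Finset.smul_sum]
  exact Finset.sum_comm' (by simp)

lemma sum_mul_sum_mem_sum_mem (w : Finset ι → ℝ) (g : ι → ι → ℝ) :
    ∑ S, w S * ∑ i ∈ S, ∑ j ∈ S, g i j = ∑ i, ∑ j, pairInclusionProb w i j * g i j := by
  simp_rw [pairInclusionProb, Matrix.of_apply, Finset.sum_mul, ← Finset.sum_product',
    Finset.mul_sum]
  exact Finset.sum_comm' (by simp)

lemma inclusionProb_le_one {w : Finset ι → ℝ} (hw0 : ∀ S, 0 ≤ w S) (hw1 : ∑ S, w S = 1) (i : ι) :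
    inclusionProb w i ≤ 1 :=
  hw1 ▸ Finset.sum_le_sum_of_subset_of_nonneg (Finset.filter_subset _ _) fun S _ _ => hw0 S

lemma inclusionCov_apply_self (w : Finset ι → ℝ) (i : ι) :
    inclusionCov w i i = inclusionProb w i * (1 - inclusionProb w i) := by
  simp [inclusionCov, pairInclusionProb, inclusionProb, mul_sub]

lemma inclusionCov_apply_self_nonneg {w : Finset ι → ℝ} (hw0 : ∀ S, 0 ≤ w S)
    (hw1 : ∑ S, w S = 1) (i : ι) : 0 ≤ inclusionCov w i i := by
  rw [inclusionCov_apply_self]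
  exact mul_nonneg (Finset.sum_nonneg fun S _ => hw0 S)
    (sub_nonneg.2 (inclusionProb_le_one hw0 hw1 i))

lemma IsESO.inclusionProb_mul_nonneg {w : Finset ι → ℝ} {v : ι → ℝ} (hv : IsESO w v)
    (hw0 : ∀ S, 0 ≤ w S) (hw1 : ∑ S, w S = 1) (i : ι) : 0 ≤ inclusionProb w i * v i := by
  have hdiag : 0 ≤ (Matrix.diagonal (fun i => inclusionProb w i * v i) - inclusionCov w) i i :=
    hv.diag_nonneg
  rw [Matrix.sub_apply, Matrix.diagonal_apply_eq, sub_nonneg] at hdiag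
  exact (inclusionCov_apply_self_nonneg hw0 hw1 i).trans hdiag

variable [NormedAddCommGroup E] [InnerProductSpace ℝ E]

lemma sum_sum_inclusionCov_mul_inner (w : Finset ι → ℝ) (a : ι → E) :
    ∑ i, ∑ j, inclusionCov w i j * ⟪a i, a j⟫_ℝ =
      ∑ S, w S * ‖∑ i ∈ S, a i‖ ^ 2 - ‖∑ i, inclusionProb w i • a i‖ ^ 2 := by
  simp_rw [norm_sum_sq_eq_sum_sum_inner, sum_mul_sum_mem_sum_mem, real_inner_smul_left,
    real_inner_smul_right, ← Finset.sum_sub_distrib, inclusionCov, Matrix.sub_apply,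
    Matrix.of_apply, sub_mul, mul_assoc]

lemma sum_mul_norm_sum_mem_add_sq {w : Finset ι → ℝ} (hw1 : ∑ S, w S = 1) (a : ι → E) (c : E) :
    ∑ S, w S * ‖∑ i ∈ S, a i + c‖ ^ 2 =
      ‖∑ i, inclusionProb w i • a i + c‖ ^ 2 +
        ∑ i, ∑ j, inclusionCov w i j * ⟪a i, a j⟫_ℝ := by
  have hcross : ∑ S, w S * ⟪∑ i ∈ S, a i, c⟫_ℝ = ⟪∑ i, inclusionProb w i • a i, c⟫_ℝ := by
    simp_rw [← sum_smul_sum_mem, sum_inner (s := Finset.univ), real_inner_smul_left]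
  calc ∑ S, w S * ‖∑ i ∈ S, a i + c‖ ^ 2
      = ∑ S, w S * ‖∑ i ∈ S, a i‖ ^ 2 + 2 * ∑ S, w S * ⟪∑ i ∈ S, a i, c⟫_ℝ
          + (∑ S, w S) * ‖c‖ ^ 2 := by
        simp_rw [norm_add_sq_real, mul_add, Finset.sum_add_distrib, Finset.sum_mul,
          Finset.mul_sum, mul_left_comm]
    _ = _ := by
        rw [hcross, hw1, norm_add_sq_real, sum_sum_inclusionCov_mul_inner]
        ring

lemma IsESO.sum_sum_inclusionCov_mul_inner_le {w : Finset ι → ℝ} {v : ι → ℝ} (hv : IsESO w v)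
    (a : ι → E) :
    ∑ i, ∑ j, inclusionCov w i j * ⟪a i, a j⟫_ℝ ≤ ∑ i, inclusionProb w i * v i * ‖a i‖ ^ 2 := by
  simpa [Matrix.diagonal_apply, sub_mul, ite_mul] using sum_sum_posSemidef_mul_inner_nonneg hv a

lemma IsESO.sum_mul_norm_sum_mem_add_sq_le {w : Finset ι → ℝ} {v : ι → ℝ} (hv : IsESO w v)
    (hw1 : ∑ S, w S = 1) (a : ι → E) (c : E) :
    ∑ S, w S * ‖∑ i ∈ S, a i + c‖ ^ 2 ≤
      ‖∑ i, inclusionProb w i • a i + c‖ ^ 2 + ∑ i, inclusionProb w i * v i * ‖a i‖ ^ 2 := by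
  rw [sum_mul_norm_sum_mem_add_sq hw1]
  exact add_le_add_right (hv.sum_sum_inclusionCov_mul_inner_le a) _

end Sampling

section ImportanceWeights

variable {ι E : Type*} [Fintype ι]

lemma sum_smul_inv_mul_smul {𝕜 : Type*} [Field 𝕜] [AddCommGroup E] [Module 𝕜 E] {p : ι → 𝕜}
    (hp : ∀ i, p i ≠ 0) (r : 𝕜) (u : ι → E) :
    ∑ i, p i • (r * p i)⁻¹ • u i = r⁻¹ • ∑ i, u i := by
  rw [Finset.smul_sum]
  refine Finset.sum_congr rfl fun i _ => ?_
  rw [smul_smul, mul_inv, mul_left_comm, mul_inv_cancel₀ (hp i), mul_one]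

lemma sum_mul_norm_inv_mul_smul_sq_le [SeminormedAddCommGroup E] [NormedSpace ℝ E]
    {p v L : ι → ℝ} {u : ι → E} {δ : ℝ} (hpv : ∀ i, 0 ≤ p i * v i)
    (hu : ∀ i, ‖u i‖ ≤ L i * δ) (r : ℝ) :
    ∑ i, p i * v i * ‖(r * p i)⁻¹ • u i‖ ^ 2 ≤ (∑ i, v i * L i ^ 2 / p i) / r ^ 2 * δ ^ 2 := by
  rw [Finset.sum_div, Finset.sum_mul]
  refine Finset.sum_le_sum fun i _ => ?_
  calc p i * v i * ‖(r * p i)⁻¹ • u i‖ ^ 2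
      = p i * v i * ((r * p i)⁻¹ ^ 2 * ‖u i‖ ^ 2) := by
        rw [norm_smul, mul_pow, Real.norm_eq_abs, sq_abs]
    _ ≤ p i * v i * ((r * p i)⁻¹ ^ 2 * (L i * δ) ^ 2) := by
        gcongr
        exacts [hpv i, hu i]
    _ = v i * L i ^ 2 / p i / r ^ 2 * δ ^ 2 := by
        field_simp

end ImportanceWeights

section Gradient

variable {ι H : Type*} [Fintype ι] [NormedAddCommGroup H] [InnerProductSpace ℝ H]
  [CompleteSpace H]

lemma gradient_const_mul_sum {f : ι → H → ℝ} {x : H} (hf : ∀ i, DifferentiableAt ℝ (f i) x)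
    (c : ℝ) : gradient (fun y => c * ∑ i, f i y) x = c • ∑ i, gradient (f i) x := by
  have hderiv : HasFDerivAt (fun y => c * ∑ i, f i y) (c • ∑ i, fderiv ℝ (f i) x) x :=
    (HasFDerivAt.fun_sum fun i _ => (hf i).hasFDerivAt).const_mul c
  simp only [gradient, hderiv.fderiv, map_smul, map_sum]

theorem svrg_estimator_second_moment_bound_general [DecidableEq ι]
    {f : ι → H → ℝ} {F : H → ℝ} (hF : F = fun y => (Fintype.card ι : ℝ)⁻¹ * ∑ i, f i y) {x xt : H}
    (hx : ∀ i, DifferentiableAt ℝ (f i) x) (hxt : ∀ i, DifferentiableAt ℝ (f i) xt)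
    {L : ι → ℝ} (hL : ∀ i, ‖gradient (f i) x - gradient (f i) xt‖ ≤ L i * ‖x - xt‖)
    {w : Finset ι → ℝ} (hw0 : ∀ S, 0 ≤ w S) (hw1 : ∑ S, w S = 1)
    (hproper : ∀ i, 0 < inclusionProb w i) {v : ι → ℝ} (hv : IsESO w v)
    {b K : ℝ} (hb : b = ∑ i, inclusionProb w i)
    (hK : K = b / (Fintype.card ι : ℝ) ^ 2 * ∑ i, v i * L i ^ 2 / inclusionProb w i) :
    ∑ S, w S * ‖∑ i ∈ S, ((Fintype.card ι : ℝ) * inclusionProb w i)⁻¹ •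
        (gradient (f i) x - gradient (f i) xt) + gradient F xt‖ ^ 2 ≤
      ‖gradient F x‖ ^ 2 + K / b * ‖x - xt‖ ^ 2 := by
  have hmean : ∑ i, inclusionProb w i • ((Fintype.card ι : ℝ) * inclusionProb w i)⁻¹ •
      (gradient (f i) x - gradient (f i) xt) + gradient F xt = gradient F x := by
    rw [sum_smul_inv_mul_smul fun i => (hproper i).ne', hF, gradient_const_mul_sum hx,
      gradient_const_mul_sum hxt, Finset.sum_sub_distrib, smul_sub, sub_add_cancel]
  have hKb : K / b = (∑ i, v i * L i ^ 2 / inclusionProb w i) / (Fintype.card ι : ℝ) ^ 2 := by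
    cases isEmpty_or_nonempty ι
    -- Here `b = 0`, and `K / b = 0` by the convention on division by zero.
    · simp [hb]
    · have hb0 : b ≠ 0 :=
        hb ▸ (Finset.sum_pos (fun i _ => hproper i) Finset.univ_nonempty).ne'
      rw [hK]
      field_simp
  calc _ ≤ _ := hv.sum_mul_norm_sum_mem_add_sq_le hw1 _ _
    _ ≤ _ := by
      rw [hmean, hKb]
      gcongr
      exact sum_mul_norm_inv_mul_smul_sq_le (hv.inclusionProb_mul_nonneg hw0 hw1) hL _

end Gradient

/-- Variance bound for the minibatch SVRG gradient estimator under arbitrary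
sampling (Lemma on the SVRG variance): `E‖w‖² ≤ 2‖∇f(x)‖² + (2K/b)‖x - x̃‖²`. -/
theorem svrg_estimator_second_moment_bound {n d : ℕ}
    (f : Fin n → EuclideanSpace ℝ (Fin d) → ℝ)
    (L : Fin n → ℝ) (hL : ∀ i, 0 ≤ L i)
    (hdiff : ∀ i, Differentiable ℝ (f i))
    (hlip : ∀ i x y, ‖gradient (f i) x - gradient (f i) y‖ ≤ L i * ‖x - y‖)
    (F : EuclideanSpace ℝ (Fin d) → ℝ)
    (hF : F = fun y => (n : ℝ)⁻¹ * ∑ i, f i y)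
    (w : Finset (Fin n) → ℝ) (hw0 : ∀ S, 0 ≤ w S) (hw1 : ∑ S, w S = 1)
    (p : Fin n → ℝ)
    (hp : ∀ i, p i = ∑ S ∈ Finset.univ.filter (fun S : Finset (Fin n) => i ∈ S), w S)
    (hproper : ∀ i, 0 < p i)
    (P : Matrix (Fin n) (Fin n) ℝ)
    (hP : ∀ i j, P i j =
      ∑ S ∈ Finset.univ.filter (fun S : Finset (Fin n) => i ∈ S ∧ j ∈ S), w S)
    (v : Fin n → ℝ)
    (hESO : (Matrix.diagonal (fun i => p i * v i) -
      (P - Matrix.of fun i j => p i * p j)).PosSemidef)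
    (b K : ℝ) (hb : b = ∑ i, p i)
    (hK : K = b / (n : ℝ) ^ 2 * ∑ i, v i * L i ^ 2 / p i)
    (x xt : EuclideanSpace ℝ (Fin d)) :
    ∑ S : Finset (Fin n), w S *
        ‖(∑ i ∈ S, ((n : ℝ) * p i)⁻¹ • (gradient (f i) x - gradient (f i) xt)) +
            gradient F xt‖ ^ 2
      ≤ 2 * ‖gradient F x‖ ^ 2 + (2 * K / b) * ‖x - xt‖ ^ 2 := by
  obtain rfl : p = inclusionProb w := funext hp
  obtain rfl : P = pairInclusionProb w := Matrix.ext hP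
  have hsharp := svrg_estimator_second_moment_bound_general (F := F) (K := K)
    (by rwa [Fintype.card_fin]) (fun i => hdiff i x) (fun i => hdiff i xt)
    (fun i => hlip i x xt) hw0 hw1 hproper hESO hb (by rwa [Fintype.card_fin])
  rw [Fintype.card_fin] at hsharp
  have hbound_nonneg : 0 ≤ ‖gradient F x‖ ^ 2 + K / b * ‖x - xt‖ ^ 2 :=
    (Finset.sum_nonneg fun S _ => mul_nonneg (hw0 S) (sq_nonneg _)).trans hsharp
  rw [mul_div_assoc, mul_assoc, ← mul_add, two_mul]
  exact hsharp.trans (le_add_of_nonneg_left hbound_nonneg)
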